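/- Let (X,T) be a flow with F = Fix(X,T), h : F → F_L a topological embedding, and p, q two distinct points in X \ F. Then there exist closed neighborhoods B of p and C of q in X such that the set G(B,C) = {f ∈ C_{T,h}(X, L(ℝ)) : f(B) ∩ f(C) = ∅} is open and dense in C_{T,h}(X, L(ℝ)). -/

import Mathlib

/-!
An element of `C_{T,h}(X, L(ℝ))` is the same thing as a continuous `φ : X → [0,1]` that is
`1`-Lipschitz along orbits and equals `h` on the fixed points, through `x ↦ (t ↦ φ (T t x))`
(`orbitMap`), and uniformly close functions give close maps (`continuous_orbitMap`). Openness of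
`G(B,C)` is compactness of `B × C`. For density, differentiability along orbits serves as the
invariant that separates `B` from `C`.

* Integrals along orbit segments (`orbInt`) are differentiable along orbits. From them one builds,
  depending on `p` and `q` only, a bump `β` near `p` vanishing at fixed points and a function `θ`
  strictly increasing along orbits on the support of `β`. The corner set
  `{β ≠ 0, θ = c}` is a local section met at a time `t ∈ [-r, r]` by every orbit starting in `B`,
  while orbits starting in `C` avoid the support of `β` during `[-r, r]`
  (`exists_section_data`). This also covers the case where `p` and `q` lie on one orbit.
* Any `φ` is uniformly close to some `ψ` that is differentiable along orbits, agrees with `φ` on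
  fixed points and has orbitwise Lipschitz constant strictly below `1` (`exists_smooth_approx`).
* The perturbation `ψ + η β (|θ - c| - ψ)` is `1`-Lipschitz along orbits for small `η`, takes
  values in `[0,1]` as a convex combination, and has a corner exactly on the local section. Hence
  for `x ∈ B` its orbit function has a corner at some `t`, where for `y ∈ C` it is differentiable
  (`orbit_ne_of_corner`).
-/

/-- L(ℝ): the 1-Lipschitz functions ℝ → [0,1], inside C(ℝ,ℝ) with the compact-open
topology. -/
def LR : Set C(ℝ, ℝ) := {φ | LipschitzWith 1 φ ∧ ∀ t : ℝ, φ t ∈ Set.Icc (0:ℝ) 1}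

/-- C_{T,h}(X, L(ℝ)): continuous ℝ-equivariant maps f : X → L(ℝ) with f|_F = h
(h being recorded by the constant value of the image function), as a subspace of
C(X, C(ℝ,ℝ)) with the compact-open (uniform) topology. -/
abbrev CTh (X : Type*) [TopologicalSpace X] (T : ℝ → X → X)
    (h : {x : X // ∀ t : ℝ, T t x = x} → ℝ) : Type _ :=
  {f : C(X, C(ℝ, ℝ)) //
    (∀ x, f x ∈ LR) ∧
    (∀ (s : ℝ) (x : X) (t : ℝ), f (T s x) t = f x (t + s)) ∧
    (∀ x : {x : X // ∀ t : ℝ, T t x = x}, ∀ t : ℝ, f x.1 t = h x)}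

/-! ### Corners -/

/-- A function with a simple zero has a corner where its absolute value vanishes. -/
lemma not_differentiableAt_abs_of_simple_zero {g : ℝ → ℝ} {t d : ℝ} (hg : HasDerivAt g d t)
    (h0 : g t = 0) (hd : d ≠ 0) : ¬ DifferentiableAt ℝ (fun s => |g s|) t := by
  intro h
  have hmin : IsLocalMin (fun s => |g s|) t :=
    Filter.Eventually.of_forall fun s => by simp [h0]
  have h1 : HasDerivAt (fun s => |g s|) 0 t := by
    have := h.hasDerivAt
    rwa [hmin.deriv_eq_zero] at this
  have h2 : HasDerivAt g 0 t := by
    rw [hasDerivAt_iff_isLittleO] at h1 ⊢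
    simp only [h0, abs_zero, sub_zero, smul_zero] at h1 ⊢
    exact Asymptotics.isLittleO_abs_left.1 h1
  exact hd (hg.unique h2)

/-! ### Averages along orbits -/

/-- The integral of `u` along the orbit segment of duration `a` that starts at `x`. -/
noncomputable def orbInt {X : Type*} (T : ℝ → X → X) (a : ℝ) (u : X → ℝ) (x : X) : ℝ :=
  ∫ s in (0:ℝ)..a, u (T s x)

section Flow

variable {X : Type*} [MetricSpace X] {T : ℝ → X → X}

lemma flow_continuous_time (hT : Continuous fun q : ℝ × X => T q.1 q.2) (x : X) :
    Continuous fun t => T t x :=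
  hT.comp (continuous_id.prodMk continuous_const)

lemma flow_continuous_space (hT : Continuous fun q : ℝ × X => T q.1 q.2) (t : ℝ) :
    Continuous fun x => T t x :=
  hT.comp (continuous_const.prodMk continuous_id)

lemma continuous_orbInt (hT : Continuous fun q : ℝ × X => T q.1 q.2) {u : X → ℝ}
    (hu : Continuous u) (a : ℝ) : Continuous (orbInt T a u) := by
  unfold orbInt
  apply intervalIntegral.continuous_parametric_intervalIntegral_of_continuous'
  exact hu.comp (hT.comp continuous_swap)

/-- Orbit integrals are differentiable along the flow, even if the integrand is not. -/
lemma hasDerivAt_orbInt (hT : Continuous fun q : ℝ × X => T q.1 q.2)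
    (hTadd : ∀ s t x, T (s + t) x = T s (T t x)) {u : X → ℝ}
    (hu : Continuous u) (a : ℝ) (x : X) (t : ℝ) :
    HasDerivAt (fun t => orbInt T a u (T t x)) (u (T (t + a) x) - u (T t x)) t := by
  have hc : Continuous fun s => u (T s x) := hu.comp (flow_continuous_time hT x)
  have hi : ∀ c d, IntervalIntegrable (fun s => u (T s x)) MeasureTheory.volume c d :=
    fun c d => hc.intervalIntegrable c d
  have h1 : ∀ c, HasDerivAt (fun t => ∫ s in (0:ℝ)..t, u (T s x)) (u (T c x)) c := fun c =>
    intervalIntegral.integral_hasDerivAt_right (hi _ _)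
      (hc.stronglyMeasurableAtFilter _ _) hc.continuousAt
  have h2 : (fun t => orbInt T a u (T t x)) =
      fun t => (∫ s in (0:ℝ)..(t + a), u (T s x)) - ∫ s in (0:ℝ)..t, u (T s x) := by
    funext t
    simp only [orbInt, ← hTadd]
    rw [intervalIntegral.integral_comp_add_right (fun s => u (T s x)),
      intervalIntegral.integral_interval_sub_left (hi _ _) (hi _ _)]
    simp [add_comm]
  rw [h2]
  exact ((h1 (t + a)).comp_add_const t a).sub (h1 t)

lemma orbInt_mem {u : X → ℝ} (hT : Continuous fun q : ℝ × X => T q.1 q.2) (hu : Continuous u)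
    {a K : ℝ} (ha : 0 ≤ a) (h : ∀ x, u x ∈ Set.Icc 0 K) (x : X) :
    orbInt T a u x ∈ Set.Icc 0 (a * K) := by
  have hc : Continuous fun s => u (T s x) := hu.comp (flow_continuous_time hT x)
  refine ⟨intervalIntegral.integral_nonneg ha fun s _ => (h _).1, ?_⟩
  have := intervalIntegral.integral_mono_on ha (hc.intervalIntegrable 0 a)
    (continuous_const.intervalIntegrable (μ := MeasureTheory.volume) 0 a)
    (fun s _ => (h (T s x)).2)
  simpa [orbInt] using this

/-- Lipschitz bounds along an orbit come from bounds on the orbitwise derivative. -/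
lemma lipschitz_of_orbit_deriv {g g' : ℝ → ℝ} {K : ℝ} (h : ∀ t, HasDerivAt g (g' t) t)
    (hb : ∀ t, |g' t| ≤ K) (s t : ℝ) : |g s - g t| ≤ K * |s - t| :=
  convex_univ.norm_image_sub_le_of_norm_hasDerivWithin_le (𝕜 := ℝ)
    (fun x _ => (h x).hasDerivWithinAt) (fun x _ => hb x) (Set.mem_univ t) (Set.mem_univ s)

lemma abs_sub_le_of_mem_Icc {a b K : ℝ} (ha : a ∈ Set.Icc 0 K) (hb : b ∈ Set.Icc 0 K) :
    |a - b| ≤ K := by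
  rw [abs_le]; constructor <;> linarith [ha.1, ha.2, hb.1, hb.2]

/-- The constant does not depend on the duration `a`, since the orbitwise derivative of the
integral is a difference of two values of `u`. -/
lemma orbInt_lipschitz (hT : Continuous fun q : ℝ × X => T q.1 q.2)
    (hTadd : ∀ s t x, T (s + t) x = T s (T t x)) {u : X → ℝ}
    (hu : Continuous u) {K : ℝ} (h : ∀ x, u x ∈ Set.Icc 0 K) (a : ℝ) (x : X) (s t : ℝ) :
    |orbInt T a u (T s x) - orbInt T a u (T t x)| ≤ K * |s - t| :=
  lipschitz_of_orbit_deriv (fun t => hasDerivAt_orbInt hT hTadd hu a x t)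
    (fun _ => abs_sub_le_of_mem_Icc (h _) (h _)) s t

/-! ### Local section and bump function -/

/-- The data for the perturbation, depending on `p` and `q` only. The zero set of `θ - c` on
`{β ≠ 0}` is a local section: the orbit of every point of `B` crosses it transversally at a small
time `t`, at which the orbits of points of `C` are away from the support of `β`. -/
lemma exists_section_data (hT : Continuous fun q : ℝ × X => T q.1 q.2)
    (hT0 : ∀ x, T 0 x = x) (hTadd : ∀ s t x, T (s + t) x = T s (T t x))
    (p q : X) (hpq : p ≠ q) (hp : ¬ ∀ t : ℝ, T t p = p) :
    ∃ (β θ : X → ℝ) (c : ℝ) (B C : Set X), IsClosed B ∧ B ∈ nhds p ∧ IsClosed C ∧ C ∈ nhds q ∧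
      Continuous β ∧ Continuous θ ∧ (∀ x, β x ∈ Set.Icc (0:ℝ) 1) ∧ (∀ x, θ x ∈ Set.Icc (0:ℝ) 1) ∧
      c ∈ Set.Icc (0:ℝ) 1 ∧
      (∀ x s t, |β (T s x) - β (T t x)| ≤ |s - t|) ∧
      (∀ x s t, |θ (T s x) - θ (T t x)| ≤ |s - t|) ∧
      (∀ x, Differentiable ℝ fun t => β (T t x)) ∧
      (∀ x, (∀ t, T t x = x) → β x = 0) ∧
      ∀ x ∈ B, ∀ y ∈ C, ∃ t d, β (T t x) ≠ 0 ∧ θ (T t x) = c ∧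
        HasDerivAt (fun s => θ (T s x)) d t ∧ d ≠ 0 ∧ ∀ᶠ s in nhds t, β (T s y) = 0 := by
  obtain ⟨a, ha, hap⟩ : ∃ a : ℝ, 0 < a ∧ T a p ≠ p := by
    push Not at hp
    obtain ⟨t, ht⟩ := hp
    rcases lt_trichotomy t 0 with h | h | h
    · refine ⟨-t, by linarith, fun h' => ht ?_⟩
      conv_lhs => rw [← h', ← hTadd]
      simp [hT0]
    · exact absurd (by rw [h, hT0]) ht
    · exact ⟨t, h, ht⟩
  -- truncation and scaling make `θ = orbInt T a u` take values in `[0,1]`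
  set u : X → ℝ := fun x => min 1 (dist x p) / (1 + a) with hu_def
  have hu : Continuous u := by fun_prop
  have huI : ∀ x, u x ∈ Set.Icc 0 (1 / (1 + a)) := fun x => by
    constructor
    · have : 0 ≤ min 1 (dist x p) := le_min zero_le_one dist_nonneg
      positivity
    · exact div_le_div_of_nonneg_right (min_le_left _ _) (by positivity)
  have hinv : 1 / (1 + a) ≤ 1 := by rw [div_le_one (by positivity)]; linarith
  have huI' : ∀ x, u x ∈ Set.Icc (0:ℝ) 1 := fun x => ⟨(huI x).1, (huI x).2.trans hinv⟩
  set θ := orbInt T a u with hθ_def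
  have hθ : Continuous θ := continuous_orbInt hT hu a
  have hθI : ∀ x, θ x ∈ Set.Icc (0:ℝ) 1 := fun x => by
    have := orbInt_mem hT hu ha.le huI x
    refine ⟨this.1, this.2.trans ?_⟩
    rw [mul_one_div, div_le_one (by positivity)]; linarith
  have hθd := hasDerivAt_orbInt hT hTadd hu a
  rw [← hθ_def] at hθd
  set U : Set X := {x | u x < u (T a x)} with hU_def
  have hU : IsOpen U := isOpen_lt hu (hu.comp (flow_continuous_space hT a))
  have hpU : p ∈ U := by
    have : 0 < dist (T a p) p := dist_pos.2 hap
    simp only [hU_def, hu_def, Set.mem_ofPred_eq, dist_self]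
    apply div_lt_div_of_pos_right _ (by positivity)
    simp [this]
  have hdU : ∀ x t, T t x ∈ U → 0 < u (T (t + a) x) - u (T t x) := fun x t h => by
    rw [sub_pos, add_comm, hTadd]; exact h
  have hpq' : 0 < dist p q := dist_pos.2 hpq
  set V : Set X := U ∩ Metric.ball p (dist p q / 2) with hV_def
  have hV : IsOpen V := hU.inter Metric.isOpen_ball
  have hpV : p ∈ V := ⟨hpU, Metric.mem_ball_self (by positivity)⟩
  -- a joint continuity statement at time zero, used with several open sets
  have key : ∀ (z : X) (O : Set X), IsOpen O → z ∈ O →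
      ∃ r > 0, ∀ t x, |t| < r → dist x z < r → T t x ∈ O := by
    intro z O hO hz
    have : (fun q : ℝ × X => T q.1 q.2) ⁻¹' O ∈ nhds ((0:ℝ), z) :=
      (hO.preimage hT).mem_nhds (by simpa [hT0] using hz)
    obtain ⟨r, hr, h⟩ := Metric.mem_nhds_iff.1 this
    refine ⟨r, hr, fun t x ht hx => h (show (t, x) ∈ Metric.ball _ _ from ?_)⟩
    rw [Metric.mem_ball, Prod.dist_eq]
    exact max_lt (by simpa using ht) hx
  obtain ⟨ρ₀, hρ₀, hρV⟩ := key p V hV hpV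
  set ρ := min ρ₀ 1 with hρ_def
  have hρ : 0 < ρ := lt_min hρ₀ one_pos
  set b : X → ℝ := fun x => max 0 (ρ - dist x p) with hb_def
  have hb : Continuous b := by fun_prop
  have hbI : ∀ x, b x ∈ Set.Icc (0:ℝ) 1 := fun x =>
    ⟨le_max_left _ _, max_le zero_le_one (by
      have := min_le_right ρ₀ 1; have := @dist_nonneg _ _ x p; linarith)⟩
  set β := orbInt T (ρ / 2) b with hβ_def
  have hβ : Continuous β := continuous_orbInt hT hb _
  have hβI : ∀ x, β x ∈ Set.Icc (0:ℝ) 1 := fun x => by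
    have := orbInt_mem hT hb (a := ρ / 2) (by positivity) hbI x
    exact ⟨this.1, this.2.trans (by have := min_le_right ρ₀ 1; linarith)⟩
  -- `β x ≠ 0` puts `T s x` in the ball of radius `ρ` for some small `s`; flow back by time `s`
  have hβV : ∀ x, β x ≠ 0 → x ∈ V := by
    intro x hx
    by_contra hxV
    apply hx
    have : ∀ s ∈ Set.uIcc 0 (ρ / 2), b (T s x) = 0 := by
      intro s hs
      rw [Set.uIcc_of_le (by positivity)] at hs
      by_contra hbs
      apply hxV
      have h1 : dist (T s x) p < ρ := by
        by_contra hd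
        exact hbs (max_eq_left (by linarith))
      have := hρV (-s) (T s x) (by
        rw [abs_neg, abs_of_nonneg hs.1]; linarith [hs.2, min_le_left ρ₀ 1])
        (h1.trans_le (min_le_left _ _))
      rwa [← hTadd, neg_add_cancel, hT0] at this
    rw [hβ_def, orbInt, intervalIntegral.integral_congr this]
    simp
  have hβp : 0 < β p := by
    refine intervalIntegral.integral_pos (by positivity)
      (hb.comp (flow_continuous_time hT p)).continuousOn (fun s _ => (hbI _).1)
      ⟨0, ⟨le_rfl, by positivity⟩, ?_⟩
    simp [hT0, hb_def, hρ]
  obtain ⟨r₁, hr₁, hB⟩ := key p {x | β x ≠ 0} (isOpen_ne_fun hβ continuous_const) hβp.ne'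
  obtain ⟨r₂, hr₂, hC⟩ := key q {x | dist p q / 2 < dist x p}
    (isOpen_lt continuous_const (by fun_prop)) (by simp [dist_comm q p, hpq'])
  set r := min r₁ r₂ / 2 with hr_def
  have hr : 0 < r := by have := lt_min hr₁ hr₂; positivity
  have hrr₁ : r < r₁ := by have := min_le_left r₁ r₂; linarith
  have hrr₂ : r < r₂ := by have := min_le_right r₁ r₂; linarith
  have hmono : StrictMonoOn (fun t => θ (T t p)) (Set.Icc (-r) r) := by
    refine strictMonoOn_of_deriv_pos (convex_Icc _ _)
      (hθ.comp (flow_continuous_time hT p)).continuousOn fun t ht => ?_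
    rw [interior_Icc] at ht
    rw [(hθd p t).deriv]
    exact hdU p t (hβV _ (hB t p (by rw [abs_lt]; constructor <;> linarith [ht.1, ht.2])
      (by simpa using hr₁))).1
  have hup : θ p < θ (T r p) := by
    simpa [hT0] using hmono (a := 0) ⟨by linarith, hr.le⟩ ⟨by linarith, le_rfl⟩ hr
  have hdn : θ (T (-r) p) < θ p := by
    simpa [hT0] using hmono (b := 0) ⟨le_rfl, by linarith⟩ ⟨by linarith, hr.le⟩ (by linarith)
  obtain ⟨r₃, hr₃, hBr⟩ := Metric.isOpen_iff.1
    ((isOpen_lt (continuous_const (y := θ p)) (hθ.comp (flow_continuous_space hT r))).inter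
      (isOpen_lt (hθ.comp (flow_continuous_space hT (-r))) (continuous_const (y := θ p))))
    p ⟨hup, hdn⟩
  have hr₁₃ : 0 < min r₁ r₃ := lt_min hr₁ hr₃
  refine ⟨β, θ, θ p, Metric.closedBall p (min r₁ r₃ / 2), Metric.closedBall q (r₂ / 2),
    Metric.isClosed_closedBall, Metric.closedBall_mem_nhds _ (by positivity),
    Metric.isClosed_closedBall, Metric.closedBall_mem_nhds _ (by positivity), hβ, hθ, hβI, hθI,
    hθI p, fun x s t => by simpa using orbInt_lipschitz hT hTadd hb hbI (ρ / 2) x s t,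
    fun x s t => by simpa using orbInt_lipschitz hT hTadd hu huI' a x s t,
    fun x t => (hasDerivAt_orbInt hT hTadd hb _ x t).differentiableAt, ?_, ?_⟩
  · intro x hx
    by_contra h
    have : u x < u (T a x) := (hβV x h).1
    rw [hx] at this
    exact lt_irrefl _ this
  · intro x hx y hy
    rw [Metric.mem_closedBall] at hx hy
    have hx1 : dist x p < r₁ := by have := min_le_left r₁ r₃; linarith
    have hx3 : dist x p < r₃ := by have := min_le_right r₁ r₃; linarith
    have hxr := hBr (Metric.mem_ball.2 hx3)
    obtain ⟨t, ht, hct⟩ := intermediate_value_Icc (by linarith : -r ≤ r)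
      (hθ.comp (flow_continuous_time hT x)).continuousOn
      (show θ p ∈ Set.Icc (θ (T (-r) x)) (θ (T r x)) from ⟨hxr.2.le, hxr.1.le⟩)
    have htr : |t| ≤ r := abs_le.2 ht
    have hβt := hB t x (by linarith) hx1
    refine ⟨t, _, hβt, hct, hθd x t, (hdU x t (hβV _ hβt).1).ne', ?_⟩
    filter_upwards [(isOpen_lt continuous_abs (continuous_const (y := r₂))).mem_nhds
      (show |t| < r₂ by linarith)] with s hs
    by_contra hne
    have h1 := hC s y hs (by linarith)
    have h2 := (hβV _ hne).2
    rw [Metric.mem_ball] at h2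
    exact absurd h1 (not_lt.2 h2.le)

/-! ### Approximation with Lipschitz slack -/

/-- Slowing down: a convex combination of a short-time average and a long-time average. Both
are differentiable along orbits, both agree with `φ` on fixed points, and the long-time average
has orbitwise Lipschitz constant `1/2`, which leaves room for a
perturbation with orbitwise Lipschitz constant `δ / 2`. -/
lemma exists_smooth_approx (hT : Continuous fun q : ℝ × X => T q.1 q.2)
    (hT0 : ∀ x, T 0 x = x) (hTadd : ∀ s t x, T (s + t) x = T s (T t x))
    {φ : X → ℝ} (hφ : Continuous φ) (hφI : ∀ x, φ x ∈ Set.Icc (0:ℝ) 1)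
    (hφL : ∀ x s t, |φ (T s x) - φ (T t x)| ≤ |s - t|) {δ : ℝ} (hδ : 0 < δ) (hδ1 : δ ≤ 1) :
    ∃ ψ : X → ℝ, Continuous ψ ∧ (∀ x, ψ x ∈ Set.Icc (0:ℝ) 1) ∧
      (∀ x s t, |ψ (T s x) - ψ (T t x)| ≤ (1 - δ / 2) * |s - t|) ∧
      (∀ x, Differentiable ℝ fun t => ψ (T t x)) ∧
      (∀ x, (∀ t, T t x = x) → ψ x = φ x) ∧
      ∀ x, |ψ x - φ x| ≤ 2 * δ := by
  set A := orbInt T δ φ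
  set L := orbInt T 2 φ
  have hAm := orbInt_mem hT hφ hδ.le hφI
  have hLm := orbInt_mem hT hφ zero_le_two hφI
  have hA1 : ∀ x, δ⁻¹ * A x ∈ Set.Icc (0:ℝ) 1 := fun x =>
    ⟨mul_nonneg (by positivity) (hAm x).1, by
      rw [inv_mul_le_iff₀ hδ]; exact (hAm x).2⟩
  have hd : ∀ x t, HasDerivAt (fun t => (1 - δ) * (δ⁻¹ * A (T t x)) + δ * (2⁻¹ * L (T t x)))
      ((1 - δ) * (δ⁻¹ * (φ (T (t + δ) x) - φ (T t x))) +
        δ * (2⁻¹ * (φ (T (t + 2) x) - φ (T t x)))) t := fun x t =>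
    (((hasDerivAt_orbInt hT hTadd hφ δ x t).const_mul δ⁻¹).const_mul (1 - δ)).add
      (((hasDerivAt_orbInt hT hTadd hφ 2 x t).const_mul 2⁻¹).const_mul δ)
  refine ⟨fun x => (1 - δ) * (δ⁻¹ * A x) + δ * (2⁻¹ * L x), ?_, ?_, ?_,
    fun x t => (hd x t).differentiableAt, ?_, ?_⟩
  · have := continuous_orbInt hT hφ δ
    have := continuous_orbInt hT hφ 2
    fun_prop
  · intro x
    have h1 := hA1 x
    have h2 := hLm x
    have h3 : 2⁻¹ * L x ∈ Set.Icc (0:ℝ) 1 := ⟨by linarith [h2.1], by linarith [h2.2]⟩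
    exact (convex_Icc (0:ℝ) 1) h1 h3 (sub_nonneg.2 hδ1) hδ.le (by ring)
  · intro x s t
    refine lipschitz_of_orbit_deriv (hd x) (fun t => ?_) s t
    have h1 : |δ⁻¹ * (φ (T (t + δ) x) - φ (T t x))| ≤ 1 := by
      rw [abs_mul, abs_of_pos (inv_pos.2 hδ), inv_mul_le_iff₀ hδ]
      simpa [abs_of_pos hδ] using hφL x (t + δ) t
    have h2 : |2⁻¹ * (φ (T (t + 2) x) - φ (T t x))| ≤ 1 / 2 := by
      rw [abs_mul]
      have := abs_sub_le_of_mem_Icc (hφI (T (t + 2) x)) (hφI (T t x))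
      norm_num
      linarith
    refine (abs_add_le _ _).trans ?_
    rw [abs_mul, abs_mul δ, abs_of_nonneg (sub_nonneg.2 hδ1), abs_of_pos hδ]
    nlinarith
  · intro x hx
    have : ∀ a, orbInt T a φ x = a * φ x := fun a => by simp [orbInt, hx]
    simp only [A, L, this]
    field_simp
    ring
  · intro x
    have hc : Continuous fun s => φ (T s x) := hφ.comp (flow_continuous_time hT x)
    have h1 : |A x - δ * φ x| ≤ δ * δ := by
      have e : A x - δ * φ x = ∫ s in (0:ℝ)..δ, (φ (T s x) - φ x) := by
        rw [intervalIntegral.integral_sub (hc.intervalIntegrable _ _)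
          (continuous_const.intervalIntegrable _ _)]
        simp [A, orbInt]
      rw [e]
      have := intervalIntegral.norm_integral_le_of_norm_le_const (a := 0) (b := δ) (C := δ)
        (f := fun s => φ (T s x) - φ x) (fun s hs => by
          rw [Set.uIoc_of_le hδ.le] at hs
          have := hφL x s 0
          rw [hT0, sub_zero, abs_of_pos hs.1] at this
          exact this.trans hs.2)
      simpa [abs_of_pos hδ] using this
    have h2 : |δ⁻¹ * A x - φ x| ≤ δ := by
      have : δ⁻¹ * A x - φ x = δ⁻¹ * (A x - δ * φ x) := by field_simp
      rw [this, abs_mul, abs_of_pos (inv_pos.2 hδ), inv_mul_le_iff₀ hδ]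
      exact h1
    have h3 := hA1 x
    have h4 := hLm x
    have h5 : |2⁻¹ * L x - δ⁻¹ * A x| ≤ 1 :=
      abs_sub_le_of_mem_Icc ⟨by linarith [h4.1], by linarith [h4.2]⟩ h3
    calc _ = |(δ⁻¹ * A x - φ x) + δ * (2⁻¹ * L x - δ⁻¹ * A x)| := by congr 1; ring
      _ ≤ _ := abs_add_le _ _
      _ ≤ _ := by rw [abs_mul, abs_of_pos hδ]; nlinarith

end Flow

/-! ### Separation by corners -/

/-- The function `ψ + η β (|θ - c| - ψ)` cannot agree along the orbits of `x` and `y`: at time `t`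
it has a corner along the first and, as `β` vanishes there, is differentiable along the second. -/
lemma orbit_ne_of_corner {X : Type*} {T : ℝ → X → X} {β θ ψ : X → ℝ} {c η : ℝ} {x y : X} {t d : ℝ} (hη : η ≠ 0)
    (hβ : ∀ x, Differentiable ℝ fun t => β (T t x))
    (hψ : ∀ x, Differentiable ℝ fun t => ψ (T t x))
    (h1 : β (T t x) ≠ 0) (h2 : θ (T t x) = c)
    (h3 : HasDerivAt (fun s => θ (T s x)) d t) (h4 : d ≠ 0)
    (h5 : ∀ᶠ s in nhds t, β (T s y) = 0)
    (heq : ∀ s, ψ (T s x) + η * (β (T s x) * (|θ (T s x) - c| - ψ (T s x))) =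
      ψ (T s y) + η * (β (T s y) * (|θ (T s y) - c| - ψ (T s y)))) : False := by
  refine not_differentiableAt_abs_of_simple_zero (h3.sub_const c) (by simp [h2]) h4 ?_
  have hx : DifferentiableAt ℝ
      (fun s => ψ (T s x) + η * (β (T s x) * (|θ (T s x) - c| - ψ (T s x)))) t := by
    refine (hψ y t).congr_of_eventuallyEq ?_
    filter_upwards [h5] with s hs
    rw [heq s, hs]; ring
  have hne : η * β (T t x) ≠ 0 := mul_ne_zero hη h1
  have hq := ((hx.sub (hψ x t)).div ((hβ x t).const_mul η) hne).add (hψ x t)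
  refine hq.congr_of_eventuallyEq ?_
  filter_upwards [((hβ x t).continuousAt.eventually_ne h1)] with s hs
  simp only [Pi.add_apply, Pi.sub_apply, Pi.div_apply]
  field_simp
  ring

/-! ### Equivariant maps from functions -/

/-- Equivariant maps `X → L(ℝ)` correspond to functions `φ : X → [0,1]` that are `1`-Lipschitz
along orbits; this is the map attached to `φ`, sending `x` to `t ↦ φ (T t x)`. -/
def orbitMap {X : Type*} [TopologicalSpace X] {T : ℝ → X → X}
    (hT : Continuous fun q : ℝ × X => T q.1 q.2) (φ : C(X, ℝ)) : C(X, C(ℝ, ℝ)) :=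
  (φ.comp ⟨fun q : X × ℝ => T q.2 q.1, hT.comp continuous_swap⟩).curry

lemma continuous_orbitMap {X : Type*} [TopologicalSpace X] [LocallyCompactSpace X] {T : ℝ → X → X}
    (hT : Continuous fun q : ℝ × X => T q.1 q.2) : Continuous (orbitMap hT) :=
  ContinuousMap.continuous_curry.comp (ContinuousMap.continuous_precomp _)

/-! ### Openness and density -/

/-- For a flow (X,T), an embedding h of F = Fix(X,T) into the constant
functions of L(ℝ), and distinct p, q ∈ X \ F, there are closed neighborhoods B ∋ p and
C ∋ q such that G(B,C) = {f ∈ C_{T,h}(X,L(ℝ)) : f(B) ∩ f(C) = ∅} is open and dense in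
C_{T,h}(X, L(ℝ)). -/
theorem stmt15 (X : Type*) [MetricSpace X] [CompactSpace X]
    (T : ℝ → X → X) (hT : Continuous fun q : ℝ × X => T q.1 q.2)
    (hT0 : ∀ x, T 0 x = x) (hTadd : ∀ s t x, T (s + t) x = T s (T t x))
    (h : {x : X // ∀ t : ℝ, T t x = x} → ℝ)
    (hh : Topology.IsEmbedding h) (hh1 : ∀ x, h x ∈ Set.Icc (0:ℝ) 1)
    (p q : X) (hpq : p ≠ q)
    (hp : ¬ ∀ t : ℝ, T t p = p) (hq : ¬ ∀ t : ℝ, T t q = q) :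
    ∃ B C : Set X, IsClosed B ∧ B ∈ nhds p ∧ IsClosed C ∧ C ∈ nhds q ∧
      IsOpen {f : CTh X T h | ∀ x ∈ B, ∀ y ∈ C, (f : C(X, C(ℝ, ℝ))) x ≠ (f : C(X, C(ℝ, ℝ))) y} ∧
      Dense {f : CTh X T h | ∀ x ∈ B, ∀ y ∈ C, (f : C(X, C(ℝ, ℝ))) x ≠ (f : C(X, C(ℝ, ℝ))) y} := by
  obtain ⟨β, θ, c, B, C, hBc, hB, hCc, hC, hβ, hθ, hβI, hθI, hcI, hβL, hθL, hβd, hβF, hsep⟩ :=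
    exists_section_data hT hT0 hTadd p q hpq hp
  refine ⟨B, C, hBc, hB, hCc, hC, ?_, ?_⟩
  · have hK : IsCompact (B ×ˢ C) := hBc.isCompact.prod hCc.isCompact
    -- tube lemma over the compact set `B ×ˢ C`
    have hO : IsOpen {z : CTh X T h × (X × X) |
        (z.1 : C(X, C(ℝ, ℝ))) z.2.1 ≠ (z.1 : C(X, C(ℝ, ℝ))) z.2.2} := by
      apply isOpen_ne_fun <;> fun_prop
    rw [isOpen_iff_mem_nhds]
    intro f hf
    have := hK.eventually_forall_of_forall_eventually (x₀ := f)
      (P := fun f z => (f : C(X, C(ℝ, ℝ))) z.1 ≠ (f : C(X, C(ℝ, ℝ))) z.2)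
      (fun z hz => hO.mem_nhds (hf z.1 hz.1 z.2 hz.2))
    filter_upwards [this] with g hg x hx y hy
    exact hg (x, y) ⟨hx, hy⟩
  · intro f
    obtain ⟨f, hfL, hfE, hfF⟩ := f
    set φ : C(X, ℝ) := ⟨fun x => f x 0, by fun_prop⟩ with hφ_def
    have hφT : ∀ x t, φ (T t x) = f x t := fun x t => by simp [hφ_def, hfE]
    have hφf : orbitMap hT φ = f := by
      ext x t; exact hφT x t
    have hφI : ∀ x, φ x ∈ Set.Icc (0:ℝ) 1 := fun x => (hfL x).2 0
    have hφL : ∀ x s t, |φ (T s x) - φ (T t x)| ≤ |s - t| := fun x s t => by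
      rw [hφT, hφT]
      simpa [Real.dist_eq] using (hfL x).1.dist_le_mul s t
    rw [closure_subtype, mem_closure_iff_nhds]
    intro N hN
    -- it suffices to perturb `φ` uniformly
    have hN' : orbitMap hT ⁻¹' N ∈ nhds φ :=
      (continuous_orbitMap hT).continuousAt.preimage_mem_nhds (by rw [hφf]; exact hN)
    obtain ⟨ε, hε, hball⟩ := Metric.mem_nhds_iff.1 hN'
    set δ := min 1 (ε / 4) with hδ_def
    have hδ : 0 < δ := lt_min one_pos (by positivity)
    have hδ1 : δ ≤ 1 := min_le_left _ _
    have hδε : δ ≤ ε / 4 := min_le_right _ _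
    obtain ⟨ψ, hψ, hψI, hψL, hψd, hψF, hψφ⟩ :=
      exists_smooth_approx hT hT0 hTadd φ.continuous hφI hφL hδ hδ1
    set w : X → ℝ := fun x => |θ x - c| - ψ x with hw_def
    have hmI : ∀ x, |θ x - c| ∈ Set.Icc (0:ℝ) 1 := fun x =>
      ⟨abs_nonneg _, abs_sub_le_of_mem_Icc (hθI x) hcI⟩
    have hw1 : ∀ x, |w x| ≤ 1 := fun x => abs_sub_le_of_mem_Icc (hmI x) (hψI x)
    have hwL : ∀ x s t, |w (T s x) - w (T t x)| ≤ 2 * |s - t| := fun x s t => by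
      have e1 := abs_abs_sub_abs_le_abs_sub (θ (T s x) - c) (θ (T t x) - c)
      rw [sub_sub_sub_cancel_right] at e1
      have e2 := hθL x s t
      have e3 := hψL x s t
      have e4 : w (T s x) - w (T t x) = (|θ (T s x) - c| - |θ (T t x) - c|) -
        (ψ (T s x) - ψ (T t x)) := by simp only [hw_def]; ring
      rw [e4]
      refine (abs_sub _ _).trans ?_
      nlinarith [abs_nonneg (s - t)]
    -- `δ / 6 * (β * w)` uses up the slack `δ / 2` in the Lipschitz constant of `ψ`
    set χ : C(X, ℝ) := ⟨fun x => ψ x + δ / 6 * (β x * w x), by fun_prop⟩ with hχ_def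
    have hχv : ∀ x, χ x = ψ x + δ / 6 * (β x * w x) := fun x => rfl
    have hβw : ∀ x, |β x * w x| ≤ 1 := fun x => by
      rw [abs_mul, abs_of_nonneg (hβI x).1]
      nlinarith [hβI x |>.1, hβI x |>.2, hw1 x, abs_nonneg (w x)]
    have hβwL : ∀ x s t, |β (T s x) * w (T s x) - β (T t x) * w (T t x)| ≤ 3 * |s - t| := by
      intro x s t
      have e : β (T s x) * w (T s x) - β (T t x) * w (T t x) =
        β (T s x) * (w (T s x) - w (T t x)) + (β (T s x) - β (T t x)) * w (T t x) := by ring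
      rw [e]
      refine (abs_add_le _ _).trans ?_
      rw [abs_mul, abs_mul, abs_of_nonneg (hβI _).1]
      have a1 : β (T s x) * |w (T s x) - w (T t x)| ≤ 1 * (2 * |s - t|) :=
        mul_le_mul (hβI _).2 (hwL x s t) (abs_nonneg _) zero_le_one
      have a2 : |β (T s x) - β (T t x)| * |w (T t x)| ≤ |s - t| * 1 :=
        mul_le_mul (hβL x s t) (hw1 _) (abs_nonneg _) (abs_nonneg _)
      linarith
    have hχI : ∀ x, χ x ∈ Set.Icc (0:ℝ) 1 := by
      intro x
      have hk0 : 0 ≤ δ / 6 * β x := mul_nonneg (by positivity) (hβI x).1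
      have hk1 : δ / 6 * β x ≤ 1 := by nlinarith [(hβI x).1, (hβI x).2]
      have := (convex_Icc (0:ℝ) 1) (hψI x) (hmI x) (sub_nonneg.2 hk1) hk0 (by ring)
      have e : χ x = (1 - δ / 6 * β x) • ψ x + (δ / 6 * β x) • |θ x - c| := by
        simp only [hχv, hw_def, smul_eq_mul]; ring
      rwa [e]
    have hχL : ∀ x s t, |χ (T s x) - χ (T t x)| ≤ |s - t| := by
      intro x s t
      have e : χ (T s x) - χ (T t x) = (ψ (T s x) - ψ (T t x)) +
        δ / 6 * (β (T s x) * w (T s x) - β (T t x) * w (T t x)) := by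
        simp only [hχv]; ring
      rw [e]
      refine (abs_add_le _ _).trans ?_
      rw [abs_mul, abs_of_pos (by positivity : 0 < δ / 6)]
      nlinarith [hψL x s t, hβwL x s t]
    have hχφ : χ ∈ Metric.ball φ ε := by
      rw [Metric.mem_ball, ContinuousMap.dist_lt_iff hε]
      intro x
      have e : χ x - φ x = (ψ x - φ x) + δ / 6 * (β x * w x) := by rw [hχv]; ring
      rw [Real.dist_eq, e]
      refine (abs_add_le _ _).trans_lt ?_
      rw [abs_mul, abs_of_pos (by positivity : 0 < δ / 6)]
      nlinarith [hψφ x, hβw x]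
    refine ⟨orbitMap hT χ, hball hχφ, ⟨orbitMap hT χ, fun x => ⟨?_, fun t => hχI _⟩, ?_, ?_⟩,
      ?_, rfl⟩
    · refine LipschitzWith.of_dist_le_mul fun s t => ?_
      rw [NNReal.coe_one, one_mul]
      exact hχL x s t
    · intro s x t
      change χ (T t (T s x)) = χ (T (t + s) x)
      rw [hTadd]
    · intro x t
      change χ (T t x.1) = h x
      rw [x.2 t, hχv, hβF _ x.2, hψF _ x.2, zero_mul, mul_zero, add_zero]
      exact hfF x 0
    · intro x hx y hy hxy
      obtain ⟨t, d, h1, h2, h3, h4, h5⟩ := hsep x hx y hy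
      exact orbit_ne_of_corner (η := δ / 6) (by positivity) hβd hψd h1 h2 h3 h4 h5
        fun s => DFunLike.congr_fun hxy s
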